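/- arXiv:1608.01697 — 3 statements merged into one kernel-verified Lean document; each statement's English description precedes it below -/
import Mathlib

section
/- Let E be a real normed vector space and let a, b, c, d ∈ E. If the closed segments [a,b] and [c,d] have a common point, then ‖a−c‖ + ‖b−d‖ ≤ ‖a−b‖ + ‖c−d‖. In particular, if ‖a−b‖ ≤ s and ‖c−d‖ ≤ s for some s > 0, then min(‖a−c‖, ‖b−d‖) ≤ s. -/
/-- If the closed segments `[a,b]` and `[c,d]` in a real normed vector space
have a common point, then `‖a-c‖ + ‖b-d‖ ≤ ‖a-b‖ + ‖c-d‖`; in particular, if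
`‖a-b‖ ≤ s` and `‖c-d‖ ≤ s` for some `s > 0`, then
`min ‖a-c‖ ‖b-d‖ ≤ s`. -/
theorem segments_intersect_norm_bound {E : Type*} [NormedAddCommGroup E]
    [NormedSpace ℝ E] (a b c d : E)
    (h : (segment ℝ a b ∩ segment ℝ c d).Nonempty) :
    ‖a - c‖ + ‖b - d‖ ≤ ‖a - b‖ + ‖c - d‖ ∧
    ∀ s : ℝ, 0 < s → ‖a - b‖ ≤ s → ‖c - d‖ ≤ s → min ‖a - c‖ ‖b - d‖ ≤ s := by
  have key : ‖a - c‖ + ‖b - d‖ ≤ ‖a - b‖ + ‖c - d‖ := by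
    obtain ⟨p, h1, h2⟩ := h
    have e1 := dist_add_dist_of_mem_segment h1
    have e2 := dist_add_dist_of_mem_segment h2
    have t1 := dist_triangle a p c
    have t2 := dist_triangle b p d
    rw [dist_comm p c] at t1
    rw [dist_comm b p] at t2
    simp only [← dist_eq_norm]
    linarith
  refine ⟨key, fun s _ h1 h2 => ?_⟩
  by_contra! hc
  rw [lt_min_iff] at hc
  linarith [hc.1, hc.2]
end

section
/- Let r > 0. Let p_0, p_1, …, p_k be points in the unit square [0,1]² with Euclidean distance |p_{i+1} − p_i| ≤ r/2 for all i, such that p_0 has x-coordinate at most r/5 and p_k has x-coordinate at least 1 − r/5. Let q_0, q_1, …, q_l be points in [0,1]² with |q_{j+1} − q_j| ≤ r/2 for all j, such that q_0 has y-coordinate at least 1 − r/5 and q_l has y-coordinate at most r/5. Then there exist indices i and j with |p_i − q_j| ≤ r. -/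
/-- Sector label of a planar vector: `0` east, `1` north, `2` west, `3` south. -/
noncomputable def sectorLabel (x y : ℝ) : Fin 4 :=
  if |y| ≤ x then 0 else if |y| ≤ -x then 2 else if 0 < y then 1 else 3

theorem sectorLabel_zero {x y : ℝ} (h : sectorLabel x y = 0) : |y| ≤ x := by
  unfold sectorLabel at h
  split_ifs at h <;> first | assumption | (exact absurd h (by decide))

theorem sectorLabel_two {x y : ℝ} (h : sectorLabel x y = 2) : |y| ≤ -x := by
  unfold sectorLabel at h
  split_ifs at h <;> first | assumption | (exact absurd h (by decide))

theorem sectorLabel_one {x y : ℝ} (h : sectorLabel x y = 1) : |x| ≤ y := by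
  unfold sectorLabel at h
  split_ifs at h with h1 h2 h3 <;> first | (exact absurd h (by decide)) | skip
  rw [abs_of_pos h3] at h1 h2
  exact abs_le.2 ⟨by linarith, by linarith⟩

theorem sectorLabel_three {x y : ℝ} (h : sectorLabel x y = 3) : |x| ≤ -y := by
  unfold sectorLabel at h
  split_ifs at h with h1 h2 h3 <;> first | (exact absurd h (by decide)) | skip
  rw [abs_of_nonpos (not_lt.1 h3)] at h1 h2
  exact abs_le.2 ⟨by linarith, by linarith⟩

theorem sector_far {r s t : ℝ} (hr : 0 < r) (h : r ^ 2 < t ^ 2 + s ^ 2) (hst : |s| ≤ t) :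
    r / 2 < t ∧ r ^ 2 < 2 * t ^ 2 := by
  have h1 := abs_le.1 hst
  have h0 : 0 ≤ t := (abs_nonneg s).trans hst
  have h2 : s ^ 2 ≤ t ^ 2 := sq_le_sq' h1.1 h1.2
  exact ⟨by nlinarith, by linarith⟩

theorem sector_opp {r s t s' t' : ℝ} (hr : 0 < r) (h : r ^ 2 < t ^ 2 + s ^ 2) (hst : |s| ≤ t)
    (h' : r ^ 2 < t' ^ 2 + s' ^ 2) (hst' : |s'| ≤ -t')
    (hd : (t - t') ^ 2 + (s - s') ^ 2 ≤ r ^ 2) : False := by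
  have a := sector_far hr h hst
  have b := sector_far (t := -t') (s := s') hr (by linarith [neg_sq t']) hst'
  have hs := sq_nonneg (s - s')
  have hlt : r ^ 2 < (t - t') ^ 2 := by nlinarith
  exact absurd hd (not_le.2 (by linarith))

/-- Two labels are opposite. -/
def oppLabel (a b : Fin 4) : Prop := b = a + 2

instance (a b : Fin 4) : Decidable (oppLabel a b) :=
  inferInstanceAs (Decidable (b = a + 2))

theorem sectorLabel_not_opp {r x y x' y' : ℝ} (hr : 0 < r) (h : r ^ 2 < x ^ 2 + y ^ 2)
    (h' : r ^ 2 < x' ^ 2 + y' ^ 2) (hd : (x - x') ^ 2 + (y - y') ^ 2 ≤ r ^ 2) :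
    ¬ oppLabel (sectorLabel x y) (sectorLabel x' y') := by
  intro ho
  unfold oppLabel at ho
  have key : ∀ a b : Fin 4, b = a + 2 →
      (a = 0 ∧ b = 2) ∨ (a = 2 ∧ b = 0) ∨ (a = 1 ∧ b = 3) ∨ (a = 3 ∧ b = 1) := by decide
  rcases key _ _ ho with ⟨h1, h2⟩ | ⟨h1, h2⟩ | ⟨h1, h2⟩ | ⟨h1, h2⟩
  · exact sector_opp hr h (sectorLabel_zero h1) h' (sectorLabel_two h2) hd
  · exact sector_opp hr h' (sectorLabel_zero h2) h (sectorLabel_two h1) (by linarith)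
  · exact sector_opp hr (by linarith) (sectorLabel_one h1) (by linarith)
      (sectorLabel_three h2) (by linarith)
  · exact sector_opp hr (by linarith) (sectorLabel_one h2) (by linarith)
      (sectorLabel_three h1) (by linarith)

/-- Indicator of an east-north edge. -/
def enEdge (a b : Fin 4) : ZMod 2 := if (a = 0 ∧ b = 1) ∨ (a = 1 ∧ b = 0) then 1 else 0

set_option synthInstance.maxHeartbeats 400000 in
set_option synthInstance.maxSize 2000 in
set_option maxRecDepth 10000 in
theorem enEdge_cell : ∀ a b c d : Fin 4, ¬ oppLabel a b → ¬ oppLabel a c → ¬ oppLabel a d →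
    ¬ oppLabel b c → ¬ oppLabel b d → ¬ oppLabel c d →
    enEdge c d = enEdge a b + enEdge a c + enEdge b d := by decide

/-- Discrete crossing lemma. -/
theorem no_labelling (k l : ℕ) (L : ℕ → ℕ → Fin 4)
    (hadj : ∀ i j i' j', i ≤ i' → i' ≤ i + 1 → j ≤ j' + 1 → j' ≤ j + 1 →
      ¬ oppLabel (L i j) (L i' j'))
    (hleft : ∀ j, L 0 j ≠ 0) (hright : ∀ j, L k j ≠ 2)
    (htop : ∀ i, L i 0 ≠ 1) (hbot : ∀ i, L i l ≠ 3) : False := by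
  let S : ℕ → ℕ → ZMod 2 := fun n j => ∑ i ∈ Finset.range n, enEdge (L i j) (L (i + 1) j)
  have hS : ∀ n j, S (n + 1) j = S n j + enEdge (L n j) (L (n + 1) j) :=
    fun n j => Finset.sum_range_succ _ _
  have hS0 : ∀ j, S 0 j = 0 := fun j => Finset.sum_range_zero _
  have row : ∀ n j, S n (j + 1) = S n j + enEdge (L n j) (L n (j + 1)) := by
    intro n j
    induction n with
    | zero =>
      have : ∀ a b : Fin 4, a ≠ 0 → b ≠ 0 → enEdge a b = 0 := by decide
      rw [hS0, hS0, this _ _ (hleft _) (hleft _), add_zero]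
    | succ n ih =>
      have c := enEdge_cell (L n j) (L (n + 1) j) (L n (j + 1)) (L (n + 1) (j + 1))
        (hadj _ _ _ _ (by omega) (by omega) (by omega) (by omega))
        (hadj _ _ _ _ (by omega) (by omega) (by omega) (by omega))
        (hadj _ _ _ _ (by omega) (by omega) (by omega) (by omega))
        (fun h => hadj n (j + 1) (n + 1) j (by omega) (by omega) (by omega) (by omega)
          ((by decide : ∀ a b : Fin 4, oppLabel a b → oppLabel b a) _ _ h))
        (hadj _ _ _ _ (by omega) (by omega) (by omega) (by omega))
        (hadj _ _ _ _ (by omega) (by omega) (by omega) (by omega))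
      rw [hS, hS, ih, c]
      have : ∀ s a b c : ZMod 2, s + a + (b + a + c) = s + b + c := by decide
      exact this _ _ _ _
  have top : ∀ n, S n 0 = 0 := by
    intro n
    induction n with
    | zero => exact hS0 0
    | succ n ih =>
      have : ∀ a b : Fin 4, a ≠ 1 → b ≠ 1 → enEdge a b = 0 := by decide
      rw [hS, ih, this _ _ (htop _) (htop _), add_zero]
  have right : ∀ j, S k j = if L k j = 1 then 1 else 0 := by
    intro j
    induction j with
    | zero => rw [top, if_neg (htop k)]
    | succ j ih =>
      have : ∀ a b : Fin 4, a ≠ 2 → b ≠ 2 → ¬ oppLabel a b →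
        (if a = 1 then (1 : ZMod 2) else 0) + enEdge a b = if b = 1 then 1 else 0 := by decide
      rw [row, ih]
      exact this _ _ (hright _) (hright _)
        (hadj _ _ _ _ (by omega) (by omega) (by omega) (by omega))
  have bot : ∀ n, S n l = if L n l = 0 then 1 else 0 := by
    intro n
    induction n with
    | zero => rw [hS0, if_neg (hleft l)]
    | succ n ih =>
      have : ∀ a b : Fin 4, a ≠ 3 → b ≠ 3 → ¬ oppLabel a b →
        (if a = 0 then (1 : ZMod 2) else 0) + enEdge a b = if b = 0 then 1 else 0 := by decide
      rw [hS, ih]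
      exact this _ _ (hbot _) (hbot _)
        (hadj _ _ _ _ (by omega) (by omega) (by omega) (by omega))
  have fin : ∀ a : Fin 4, a ≠ 2 → a ≠ 3 →
      (if a = 1 then (1 : ZMod 2) else 0) ≠ if a = 0 then 1 else 0 := by decide
  exact fin _ (hright l) (hbot k) ((right l).symm.trans (bot k))

theorem clamp_step {m : ℕ} {r : ℝ} (hr : 0 < r) (p : Fin (m + 1) → EuclideanSpace ℝ (Fin 2))
    (h : ∀ i : Fin m, dist (p i.castSucc) (p i.succ) ≤ r / 2) (i i' : ℕ)
    (h1 : i ≤ i' + 1) (h2 : i' ≤ i + 1) :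
    dist (p ⟨min i m, by omega⟩) (p ⟨min i' m, by omega⟩) ≤ r / 2 := by
  have up : ∀ n : ℕ, dist (p ⟨min n m, by omega⟩) (p ⟨min (n + 1) m, by omega⟩) ≤ r / 2 := by
    intro n
    by_cases hn : n < m
    · convert h ⟨n, hn⟩ using 3
      · simp [Fin.ext_iff]; omega
      · simp [Fin.ext_iff]; omega
    · have e : (⟨min n m, by omega⟩ : Fin (m + 1)) = ⟨min (n + 1) m, by omega⟩ := by
        simp only [Fin.mk.injEq]; omega
      rw [e, dist_self]; linarith
  rcases (by omega : i' = i + 1 ∨ i' = i ∨ i = i' + 1) with rfl | rfl | rfl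
  · exact up i
  · rw [dist_self]; linarith
  · have h3 := up i'
    rw [dist_comm] at h3
    exact h3


/-- A left-to-right chain and a top-to-bottom chain of the unit square, each
with step size at most `r/2` and endpoints within `r/5` of the respective
sides, must come within Euclidean distance `r` of each other. -/
theorem crossing_chains_close (r : ℝ) (hr : 0 < r) (k l : ℕ)
    (p : Fin (k + 1) → EuclideanSpace ℝ (Fin 2))
    (q : Fin (l + 1) → EuclideanSpace ℝ (Fin 2))
    (hp : ∀ i, p i 0 ∈ Set.Icc (0:ℝ) 1 ∧ p i 1 ∈ Set.Icc (0:ℝ) 1)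
    (hq : ∀ j, q j 0 ∈ Set.Icc (0:ℝ) 1 ∧ q j 1 ∈ Set.Icc (0:ℝ) 1)
    (hpstep : ∀ i : Fin k, dist (p i.castSucc) (p i.succ) ≤ r / 2)
    (hqstep : ∀ j : Fin l, dist (q j.castSucc) (q j.succ) ≤ r / 2)
    (hp0 : p 0 0 ≤ r / 5) (hpk : 1 - r / 5 ≤ p (Fin.last k) 0)
    (hq0 : 1 - r / 5 ≤ q 0 1) (hql : q (Fin.last l) 1 ≤ r / 5) :
    ∃ i j, dist (p i) (q j) ≤ r := by
  by_contra hcon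
  push Not at hcon
  let P : ℕ → EuclideanSpace ℝ (Fin 2) := fun i => p ⟨min i k, by omega⟩
  let Q : ℕ → EuclideanSpace ℝ (Fin 2) := fun j => q ⟨min j l, by omega⟩
  have hP : ∀ i, P i 0 ∈ Set.Icc (0:ℝ) 1 ∧ P i 1 ∈ Set.Icc (0:ℝ) 1 := fun i => hp _
  have hQ : ∀ i, Q i 0 ∈ Set.Icc (0:ℝ) 1 ∧ Q i 1 ∈ Set.Icc (0:ℝ) 1 := fun i => hq _
  have hP0 : P 0 0 ≤ r / 5 := by
    have e : P 0 = p 0 := by simp [P]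
    rw [e]; exact hp0
  have hQ0 : 1 - r / 5 ≤ Q 0 1 := by
    have e : Q 0 = q 0 := by simp [Q]
    rw [e]; exact hq0
  have hPk : 1 - r / 5 ≤ P k 0 := by
    have e : P k = p (Fin.last k) := by simp [P, Fin.last]
    rw [e]; exact hpk
  have hQl : Q l 1 ≤ r / 5 := by
    have e : Q l = q (Fin.last l) := by simp [Q, Fin.last]
    rw [e]; exact hql
  have far : ∀ i j, r ^ 2 < (P i 0 - Q j 0) ^ 2 + (P i 1 - Q j 1) ^ 2 := by
    intro i j
    have h : r < dist (P i) (Q j) := hcon _ _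
    rw [EuclideanSpace.dist_eq, Fin.sum_univ_two, Real.lt_sqrt hr.le] at h
    simpa only [Real.dist_eq, sq_abs] using h
  have near : ∀ i j i' j', i ≤ i' → i' ≤ i + 1 → j ≤ j' + 1 → j' ≤ j + 1 →
      ((P i 0 - Q j 0) - (P i' 0 - Q j' 0)) ^ 2 + ((P i 1 - Q j 1) - (P i' 1 - Q j' 1)) ^ 2
        ≤ r ^ 2 := by
    intro i j i' j' h1 h2 h3 h4
    have a : dist (P i) (P i') ≤ r / 2 := clamp_step hr p hpstep i i' (by omega) h2
    have b : dist (Q j) (Q j') ≤ r / 2 := clamp_step hr q hqstep j j' h3 h4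
    have c : dist (P i - Q j) (P i' - Q j') ≤ r :=
      (dist_sub_sub_le _ _ _ _).trans (by linarith)
    rw [EuclideanSpace.dist_eq, Fin.sum_univ_two, Real.sqrt_le_left hr.le] at c
    simpa only [Real.dist_eq, sq_abs, PiLp.sub_apply] using c
  refine no_labelling k l (fun i j => sectorLabel (P i 0 - Q j 0) (P i 1 - Q j 1))
    (fun i j i' j' h1 h2 h3 h4 => sectorLabel_not_opp hr (far _ _) (far _ _)
      (near i j i' j' h1 h2 h3 h4)) ?_ ?_ ?_ ?_
  · intro j h
    have := (sector_far hr (far 0 j) (sectorLabel_zero h)).1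
    linarith [(hQ j).1.1]
  · intro j h
    have := (sector_far hr (by linarith [far k j, neg_sq (P k 0 - Q j 0)])
      (sectorLabel_two h)).1
    linarith [(hQ j).1.2]
  · intro i h
    have := (sector_far hr (by linarith [far i 0]) (sectorLabel_one h)).1
    linarith [(hP i).2.2]
  · intro i h
    have := (sector_far hr (by linarith [far i l, neg_sq (P i 1 - Q l 1)])
      (sectorLabel_three h)).1
    linarith [(hP i).2.1]
end

section
/- Let r > 0 and let P be a finite set of points in the unit square [0,1]², and let G be the graph on P in which two points are adjacent iff their Euclidean distance is at most r. Suppose [0,1]² is partitioned into finitely many horizontal slabs [0,1] × [y_i, y_{i+1}] and, separately, into finitely many vertical slabs [x_j, x_{j+1}] × [0,1], and suppose that every horizontal slab contains a left-to-right crossing from P and every vertical slab contains a top-to-bottom crossing from P. Then all points belonging to any of these crossings lie in a single connected component of G. -/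
/-- `v 0 ⋯ v k` is a left-to-right crossing (from the point set `P`) of the
horizontal slab `[0,1] × [ylo, yhi]`, for connection radius `r` :
a chain of points of `P` contained in the slab whose first point is within
Euclidean distance `r/5` of the left side, whose last point is within `r/5`
of the right side, and whose consecutive points are at distance at most `r/2`. -/
def IsLRCrossE (P : Set (EuclideanSpace ℝ (Fin 2))) (r ylo yhi : ℝ) (k : ℕ)
    (v : Fin (k + 1) → EuclideanSpace ℝ (Fin 2)) : Prop :=
  (∀ i, v i ∈ P) ∧
  (∀ i, v i 0 ∈ Set.Icc (0:ℝ) 1 ∧ v i 1 ∈ Set.Icc ylo yhi) ∧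
  v 0 0 ≤ r / 5 ∧ 1 - r / 5 ≤ v (Fin.last k) 0 ∧
  ∀ i : Fin k, dist (v i.castSucc) (v i.succ) ≤ r / 2

/-- `v 0 ⋯ v k` is a top-to-bottom crossing of the vertical slab
`[xlo, xhi] × [0,1]`. -/
def IsTBCrossE (P : Set (EuclideanSpace ℝ (Fin 2))) (r xlo xhi : ℝ) (k : ℕ)
    (v : Fin (k + 1) → EuclideanSpace ℝ (Fin 2)) : Prop :=
  (∀ i, v i ∈ P) ∧
  (∀ i, v i 0 ∈ Set.Icc xlo xhi ∧ v i 1 ∈ Set.Icc (0:ℝ) 1) ∧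
  1 - r / 5 ≤ v 0 1 ∧ v (Fin.last k) 1 ≤ r / 5 ∧
  ∀ i : Fin k, dist (v i.castSucc) (v i.succ) ≤ r / 2

/-- Signed increment between two cyclic labels. -/
def cycInc (p q : Fin 4) : ℤ :=
  if q = p + 1 then 1 else if p = q + 1 then -1 else 0

theorem cycInc_mod_aux : ∀ p q : Fin 4, p ≠ q + 2 →
    ((p.val : ℤ) + cycInc p q - q.val) % 4 = 0 := by
  decide

theorem cycInc_mod (p q : Fin 4) (h : p ≠ q + 2) :
    ∃ m : ℤ, (p.val : ℤ) + cycInc p q = q.val + 4 * m := by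
  have := cycInc_mod_aux p q h
  exact ⟨((p.val : ℤ) + cycInc p q - q.val) / 4, by omega⟩

theorem cycInc_bd (p q : Fin 4) : -1 ≤ cycInc p q ∧ cycInc p q ≤ 1 := by
  unfold cycInc
  split_ifs <;> norm_num

theorem cycInc_square_aux : ∀ p q s t : Fin 4, (p ≠ q + 2 ∧ p ≠ s + 2 ∧ p ≠ t + 2 ∧ q ≠ s + 2 ∧
    q ≠ t + 2 ∧ s ≠ t + 2) → cycInc p q + cycInc q t = cycInc p s + cycInc s t := by
  decide

theorem cycInc_square (p q s t : Fin 4) (h1 : p ≠ q + 2) (h2 : p ≠ s + 2) (h3 : p ≠ t + 2)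
    (h4 : q ≠ s + 2) (h5 : q ≠ t + 2) (h6 : s ≠ t + 2) :
    cycInc p q + cycInc q t = cycInc p s + cycInc s t :=
  cycInc_square_aux p q s t ⟨h1, h2, h3, h4, h5, h6⟩

/-- Lift of the bottom row of labels. -/
def rowLift (c : ℕ → ℕ → Fin 4) : ℕ → ℤ
  | 0 => (c 0 0).val
  | i + 1 => rowLift c i + cycInc (c i 0) (c (i + 1) 0)

/-- Lift of all labels. -/
def gridLift (c : ℕ → ℕ → Fin 4) (i : ℕ) : ℕ → ℤ
  | 0 => rowLift c i
  | j + 1 => gridLift c i j + cycInc (c i j) (c i (j + 1))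

/-- Integer sequence with small steps avoiding a residue stays in its window. -/
theorem window (l : ℕ → ℤ) (d : ℕ → Fin 4) (A : ℤ) (e : ℕ)
    (hl : ∀ n, ∃ m : ℤ, l n = (d n).val + 4 * m)
    (hs : ∀ n, -1 ≤ l (n + 1) - l n ∧ l (n + 1) - l n ≤ 1)
    (hA : ∃ m : ℤ, A = e + 4 * m) (he : ∀ n, (d n).val ≠ e) (he4 : e < 4)
    (h0 : A < l 0 ∧ l 0 < A + 4) : ∀ n, A < l n ∧ l n < A + 4 := by
  intro n
  induction n with
  | zero => exact h0
  | succ n ih =>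
    have h1 := hs n
    obtain ⟨m, hm⟩ := hl (n + 1)
    obtain ⟨m', hm'⟩ := hA
    have h2 := he (n + 1)
    have h3 := (d (n + 1)).isLt
    omega

theorem no_labels (c : ℕ → ℕ → Fin 4) (K L : ℕ)
    (hopp : ∀ i j i' j', (i' = i ∨ i' = i + 1 ∨ i = i' + 1) → (j' = j ∨ j' = j + 1 ∨ j = j' + 1) →
      c i j ≠ c i' j' + 2)
    (hl : ∀ j, (c 0 j).val ≠ 0) (hr : ∀ j, (c K j).val ≠ 2)
    (hb : ∀ i, (c i 0).val ≠ 1) (ht : ∀ i, (c i L).val ≠ 3) : False := by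
  have hv : ∀ i j, gridLift c i (j + 1) - gridLift c i j = cycInc (c i j) (c i (j + 1)) := by
    intro i j
    simp [gridLift]
  have hh : ∀ j i, gridLift c (i + 1) j - gridLift c i j = cycInc (c i j) (c (i + 1) j) := by
    intro j
    induction j with
    | zero => intro i; simp [gridLift, rowLift]
    | succ j ih =>
      intro i
      have h1 := ih i
      have h2 := hv i j
      have h3 := hv (i + 1) j
      have h4 := cycInc_square (c i j) (c (i + 1) j) (c i (j + 1)) (c (i + 1) (j + 1))
        (hopp _ _ _ _ (by simp) (by simp)) (hopp _ _ _ _ (by simp) (by simp))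
        (hopp _ _ _ _ (by simp) (by simp)) (hopp _ _ _ _ (by simp) (by simp))
        (hopp _ _ _ _ (by simp) (by simp)) (hopp _ _ _ _ (by simp) (by simp))
      linarith
  have hm0 : ∀ i, ∃ m : ℤ, gridLift c i 0 = (c i 0).val + 4 * m := by
    intro i
    induction i with
    | zero => exact ⟨0, by simp [gridLift, rowLift]⟩
    | succ i ih =>
      obtain ⟨m, hm⟩ := ih
      obtain ⟨m', hm'⟩ := cycInc_mod (c i 0) (c (i + 1) 0) (hopp _ _ _ _ (by simp) (by simp))
      have := hh 0 i
      exact ⟨m + m', by linarith⟩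
  have hm : ∀ i j, ∃ m : ℤ, gridLift c i j = (c i j).val + 4 * m := by
    intro i j
    induction j with
    | zero => exact hm0 i
    | succ j ih =>
      obtain ⟨m, hm⟩ := ih
      obtain ⟨m', hm'⟩ := cycInc_mod (c i j) (c i (j + 1)) (hopp _ _ _ _ (by simp) (by simp))
      have := hv i j
      exact ⟨m + m', by linarith⟩
  have hvs : ∀ i j, -1 ≤ gridLift c i (j + 1) - gridLift c i j ∧
      gridLift c i (j + 1) - gridLift c i j ≤ 1 := by
    intro i j; rw [hv]; exact cycInc_bd _ _
  have hhs : ∀ j i, -1 ≤ gridLift c (i + 1) j - gridLift c i j ∧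
      gridLift c (i + 1) j - gridLift c i j ≤ 1 := by
    intro i j; rw [hh]; exact cycInc_bd _ _
  have h00 : gridLift c 0 0 = (c 0 0).val := by simp [gridLift, rowLift]
  have a1 := hl 0
  have a2 := hb 0
  have a3 := (c 0 0).isLt
  have left := window (gridLift c 0) (c 0) 0 0 (hm 0) (hvs 0) ⟨0, by simp⟩ hl (by norm_num)
    (by omega) L
  have bot := window (fun i => gridLift c i 0) (fun i => c i 0) 1 1 (fun i => hm i 0) (hhs 0)
    ⟨0, by simp⟩ hb (by norm_num) (by omega) K
  obtain ⟨m1, e1⟩ := hm 0 L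
  obtain ⟨m2, e2⟩ := hm K 0
  obtain ⟨m3, e3⟩ := hm K L
  have b1 := ht 0
  have b2 := hr 0
  have b3 := (c 0 L).isLt
  have b4 := (c K 0).isLt
  have right := window (gridLift c K) (c K) 2 2 (hm K) (hvs K) ⟨0, by simp⟩ hr (by norm_num)
    (by omega) L
  have top := window (fun i => gridLift c i L) (fun i => c i L) (-1) 3 (fun i => hm i L) (hhs L)
    ⟨-1, by simp⟩ ht (by norm_num) (by omega) K
  have b5 := (c K L).isLt
  have b6 := ht K
  have b7 := hr L
  omega

theorem exists_label (r X Y : ℝ) (hr : 0 < r) (h : r ^ 2 < X ^ 2 + Y ^ 2) :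
    ∃ c : Fin 4, (c.val = 0 → 0.7 * r < X) ∧ (c.val = 1 → 0.7 * r < Y) ∧
      (c.val = 2 → X < -(0.7 * r)) ∧ (c.val = 3 → Y < -(0.7 * r)) := by
  have key : ∀ A B : ℝ, r ^ 2 < A ^ 2 + B ^ 2 → |B| ≤ |A| → 0.7 * r < |A| := by
    intro A B h1 h2
    have h3 := sq_le_sq.mpr h2
    by_contra hc
    push Not at hc
    have := abs_nonneg A
    have h5 := sq_abs A
    nlinarith
  rcases le_total |Y| |X| with h1 | h1
  · have h2 := key X Y h h1
    rcases le_total 0 X with h3 | h3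
    · rw [abs_of_nonneg h3] at h2
      exact ⟨0, by simpa using h2⟩
    · rw [abs_of_nonpos h3] at h2
      exact ⟨2, by simp; linarith⟩
  · have h2 := key Y X (by linarith) h1
    rcases le_total 0 Y with h3 | h3
    · rw [abs_of_nonneg h3] at h2
      exact ⟨1, by simpa using h2⟩
    · rw [abs_of_nonpos h3] at h2
      exact ⟨3, by simp; linarith⟩

theorem close_of_cross (r : ℝ) (hr : 0 < r) (ax ay bx bY : ℕ → ℝ) (K L : ℕ)
    (ha : ∀ i, 0 ≤ ax i ∧ ax i ≤ 1 ∧ 0 ≤ ay i ∧ ay i ≤ 1)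
    (hb : ∀ i, 0 ≤ bx i ∧ bx i ≤ 1 ∧ 0 ≤ bY i ∧ bY i ≤ 1)
    (hax : ∀ i, |ax i - ax (i + 1)| ≤ r / 2) (hay : ∀ i, |ay i - ay (i + 1)| ≤ r / 2)
    (hbx : ∀ i, |bx i - bx (i + 1)| ≤ r / 2) (hby : ∀ i, |bY i - bY (i + 1)| ≤ r / 2)
    (h1 : ax 0 ≤ r / 5) (h2 : 1 - r / 5 ≤ ax K) (h3 : 1 - r / 5 ≤ bY 0) (h4 : bY L ≤ r / 5) :
    ∃ i j, (ax i - bx j) ^ 2 + (ay i - bY j) ^ 2 ≤ r ^ 2 := by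
  by_contra hcon
  push Not at hcon
  choose c hc using fun i j => exists_label r (ax i - bx j) (ay i - bY j) hr (hcon i j)
  have step : ∀ u : ℕ → ℝ, (∀ i, |u i - u (i + 1)| ≤ r / 2) → ∀ i i',
      (i' = i ∨ i' = i + 1 ∨ i = i' + 1) → |u i - u i'| ≤ r / 2 := by
    rintro u hu i i' (rfl | rfl | rfl)
    · simp; positivity
    · exact hu i
    · rw [abs_sub_comm]; exact hu i'
  refine no_labels c K L ?_ ?_ ?_ ?_ ?_
  · intro i j i' j' hi hj heq
    have e1 := abs_le.mp (step ax hax i i' hi)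
    have e2 := abs_le.mp (step ay hay i i' hi)
    have e3 := abs_le.mp (step bx hbx j j' hj)
    have e4 := abs_le.mp (step bY hby j j' hj)
    obtain ⟨p0, p1, p2, p3⟩ := hc i j
    obtain ⟨q0, q1, q2, q3⟩ := hc i' j'
    rw [heq] at p0 p1 p2 p3
    generalize c i' j' = q at *
    fin_cases q <;> simp at p0 p1 p2 p3 q0 q1 q2 q3 <;> linarith
  · intro j hj
    have := (hc 0 j).1 hj
    have := hb j
    linarith
  · intro j hj
    have := (hc K j).2.2.1 hj
    have := hb j
    linarith
  · intro j hj
    have := (hc j 0).2.1 hj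
    have := ha j
    linarith
  · intro j hj
    have := (hc j L).2.2.2 hj
    have := ha j
    linarith

/-- Extend a finite chain to a sequence by clamping. -/
def clampSeq {α : Type*} {k : ℕ} (v : Fin (k + 1) → α) (n : ℕ) : α :=
  v ⟨min n k, by omega⟩

theorem clampSeq_step {k : ℕ} (v : Fin (k + 1) → EuclideanSpace ℝ (Fin 2)) (r : ℝ) (hr : 0 < r)
    (h : ∀ i : Fin k, dist (v i.castSucc) (v i.succ) ≤ r / 2) (n : ℕ) :
    dist (clampSeq v n) (clampSeq v (n + 1)) ≤ r / 2 := by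
  by_cases hn : n < k
  · have h1 := h ⟨n, hn⟩
    have e1 : clampSeq v n = v (Fin.castSucc ⟨n, hn⟩) := by
      unfold clampSeq; congr 1; ext; simp; omega
    have e2 : clampSeq v (n + 1) = v (Fin.succ ⟨n, hn⟩) := by
      unfold clampSeq; congr 1; ext; simp; omega
    rw [e1, e2]; exact h1
  · have : clampSeq v n = clampSeq v (n + 1) := by
      unfold clampSeq; congr 1; ext; simp; omega
    rw [this, dist_self]; positivity

theorem clampSeq_zero {α : Type*} {k : ℕ} (v : Fin (k + 1) → α) : clampSeq v 0 = v 0 := by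
  unfold clampSeq; congr 1

theorem clampSeq_last {α : Type*} {k : ℕ} (v : Fin (k + 1) → α) :
    clampSeq v k = v (Fin.last k) := by
  unfold clampSeq; congr 1; ext; simp

theorem coord_le (p q : EuclideanSpace ℝ (Fin 2)) (i : Fin 2) : |p i - q i| ≤ dist p q := by
  rw [dist_eq_norm]
  have := PiLp.norm_apply_le (p - q) i
  simpa using this

/-- If the unit square is partitioned into horizontal slabs (with cuts `ys`)
and into vertical slabs (with cuts `xs`), every horizontal slab has a
left-to-right crossing from the finite point set `P` and every vertical slab a
top-to-bottom crossing, then all points lying on any such crossing belong to a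
single connected component of the geometric graph `G` on `P` with radius `r`. -/
theorem crossings_in_one_component (r : ℝ) (hr : 0 < r)
    (P : Set (EuclideanSpace ℝ (Fin 2))) (hPfin : P.Finite)
    (hPsq : ∀ x ∈ P, x 0 ∈ Set.Icc (0:ℝ) 1 ∧ x 1 ∈ Set.Icc (0:ℝ) 1)
    (G : SimpleGraph ↥P)
    (hG : ∀ x y : ↥P, G.Adj x y ↔ x ≠ y ∧
      dist (x : EuclideanSpace ℝ (Fin 2)) (y : EuclideanSpace ℝ (Fin 2)) ≤ r)
    (h' w' : ℕ) (ys : Fin (h' + 1) → ℝ) (xs : Fin (w' + 1) → ℝ)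
    (hys0 : ys 0 = 0) (hys1 : ys (Fin.last h') = 1) (hysm : Monotone ys)
    (hxs0 : xs 0 = 0) (hxs1 : xs (Fin.last w') = 1) (hxsm : Monotone xs)
    (hLR : ∀ i : Fin h', ∃ k v, IsLRCrossE P r (ys i.castSucc) (ys i.succ) k v)
    (hTB : ∀ j : Fin w', ∃ k v, IsTBCrossE P r (xs j.castSucc) (xs j.succ) k v) :
    ∀ x y : ↥P,
      ((∃ i : Fin h', ∃ k v, IsLRCrossE P r (ys i.castSucc) (ys i.succ) k v ∧
          ∃ t, v t = (x : EuclideanSpace ℝ (Fin 2))) ∨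
        (∃ j : Fin w', ∃ k v, IsTBCrossE P r (xs j.castSucc) (xs j.succ) k v ∧
          ∃ t, v t = (x : EuclideanSpace ℝ (Fin 2)))) →
      ((∃ i : Fin h', ∃ k v, IsLRCrossE P r (ys i.castSucc) (ys i.succ) k v ∧
          ∃ t, v t = (y : EuclideanSpace ℝ (Fin 2))) ∨
        (∃ j : Fin w', ∃ k v, IsTBCrossE P r (xs j.castSucc) (xs j.succ) k v ∧
          ∃ t, v t = (y : EuclideanSpace ℝ (Fin 2)))) →
      G.Reachable x y := by
  have hadj : ∀ x y : ↥P, dist (x : EuclideanSpace ℝ (Fin 2)) y ≤ r → G.Reachable x y := by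
    intro x y hd
    by_cases hxy : x = y
    · rw [hxy]
    · exact ((hG x y).mpr ⟨hxy, hd⟩).reachable
  have chain : ∀ (k : ℕ) (v : Fin (k + 1) → EuclideanSpace ℝ (Fin 2)) (hv : ∀ i, v i ∈ P),
      (∀ i : Fin k, dist (v i.castSucc) (v i.succ) ≤ r / 2) →
      ∀ s t, G.Reachable ⟨v s, hv s⟩ ⟨v t, hv t⟩ := by
    intro k v hv hd
    have h0 : ∀ s, G.Reachable ⟨v 0, hv 0⟩ ⟨v s, hv s⟩ := by
      intro s
      induction s using Fin.induction with
      | zero => exact SimpleGraph.Reachable.refl _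
      | succ i ih => exact ih.trans (hadj _ _ (by have := hd i; simp only; linarith))
    exact fun s t => (h0 s).symm.trans (h0 t)
  have cross : ∀ ylo yhi xlo xhi k v l w, IsLRCrossE P r ylo yhi k v →
      IsTBCrossE P r xlo xhi l w → ∀ x y : ↥P, (∃ t, v t = (x : EuclideanSpace ℝ (Fin 2))) →
      (∃ t, w t = (y : EuclideanSpace ℝ (Fin 2))) → G.Reachable x y := by
    rintro ylo yhi xlo xhi k v l w ⟨hv, -, hv0, hv1, hvs⟩ ⟨hw, -, hw0, hw1, hws⟩ ⟨x, hx⟩ ⟨y, hy⟩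
      ⟨s, rfl⟩ ⟨t, rfl⟩
    have hstep := fun n => clampSeq_step v r hr hvs n
    have hstep' := fun n => clampSeq_step w r hr hws n
    obtain ⟨i, j, hij⟩ := close_of_cross r hr (fun n => clampSeq v n 0) (fun n => clampSeq v n 1)
      (fun n => clampSeq w n 0) (fun n => clampSeq w n 1) k l
      (fun i => by
        have := hPsq (clampSeq v i) (hv _)
        exact ⟨this.1.1, this.1.2, this.2.1, this.2.2⟩)
      (fun i => by
        have := hPsq (clampSeq w i) (hw _)
        exact ⟨this.1.1, this.1.2, this.2.1, this.2.2⟩)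
      (fun i => (coord_le _ _ _).trans (hstep i)) (fun i => (coord_le _ _ _).trans (hstep i))
      (fun i => (coord_le _ _ _).trans (hstep' i)) (fun i => (coord_le _ _ _).trans (hstep' i))
      (by simpa only [clampSeq_zero] using hv0) (by simpa only [clampSeq_last] using hv1)
      (by simpa only [clampSeq_zero] using hw0) (by simpa only [clampSeq_last] using hw1)
    have hd : dist (clampSeq v i) (clampSeq w j) ≤ r := by
      rw [EuclideanSpace.dist_eq, Fin.sum_univ_two, Real.dist_eq, Real.dist_eq, sq_abs, sq_abs]
      exact Real.sqrt_le_iff.mpr ⟨hr.le, hij⟩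
    exact ((chain k v hv hvs s _).trans
      (hadj ⟨clampSeq v i, hv _⟩ ⟨clampSeq w j, hw _⟩ hd)).trans (chain l w hw hws _ t)
  have hh : 0 < h' := by
    rcases Nat.eq_zero_or_pos h' with rfl | h
    · have : Fin.last 0 = 0 := rfl
      rw [this, hys0] at hys1
      norm_num at hys1
    · exact h
  have hw : 0 < w' := by
    rcases Nat.eq_zero_or_pos w' with rfl | h
    · have : Fin.last 0 = 0 := rfl
      rw [this, hxs0] at hxs1
      norm_num at hxs1
    · exact h
  obtain ⟨k0, v0, hv0⟩ := hLR ⟨0, hh⟩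
  obtain ⟨l0, w0, hw0⟩ := hTB ⟨0, hw⟩
  have hA : G.Reachable ⟨v0 0, hv0.1 0⟩ ⟨w0 0, hw0.1 0⟩ :=
    cross _ _ _ _ _ _ _ _ hv0 hw0 _ _ ⟨0, rfl⟩ ⟨0, rfl⟩
  have main : ∀ x : ↥P, ((∃ i : Fin h', ∃ k v, IsLRCrossE P r (ys i.castSucc) (ys i.succ) k v ∧
          ∃ t, v t = (x : EuclideanSpace ℝ (Fin 2))) ∨
        (∃ j : Fin w', ∃ k v, IsTBCrossE P r (xs j.castSucc) (xs j.succ) k v ∧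
          ∃ t, v t = (x : EuclideanSpace ℝ (Fin 2)))) →
        G.Reachable x ⟨w0 0, hw0.1 0⟩ := by
    rintro x (⟨i, k, v, hv, ht⟩ | ⟨j, k, v, hv, ht⟩)
    · exact cross _ _ _ _ _ _ _ _ hv hw0 _ _ ht ⟨0, rfl⟩
    · exact (cross _ _ _ _ _ _ _ _ hv0 hv ⟨v0 0, hv0.1 0⟩ x ⟨0, rfl⟩ ht).symm.trans hA
  exact fun x y hx hy => (main x hx).trans (main y hy).symm
end
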